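/- arXiv:1411.3432 — 2 statements merged into one kernel-verified Lean document; each statement's English description precedes it below -/
import Mathlib

section
/- Suppose n ≡ 1 (mod 4). If φ is an (n+1)/2-isometry of C_n fixing 0̄ that is not an isometry, then φ is a σ_{i,j}-mapping for some i, j ∈ {1,...,n} and some bijection σ : {1,...,n}∖{i} → {1,...,n}∖{j}. Conversely, every σ_{i,j}-mapping on C_n is an (n+1)/2-isometry. -/
/-- The `σ_{i,j}`-mapping of the Boolean cube `C_n` associated with coordinates `i, j` and
a bijection `σ : {1,…,n} \ {i} → {1,…,n} \ {j}`. -/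
def sigmaMap (n : ℕ) (i j : Fin n)
    (σ : {k : Fin n // k ≠ i} ≃ {k : Fin n // k ≠ j}) :
    (Fin n → ZMod 2) → Fin n → ZMod 2 :=
  fun c k => if h : k = j then c i else c (σ.symm ⟨k, h⟩).1 + c i

/-!
Write `n + 1 = 2 * p` with `p` odd and fold the Hamming distance `d` to `min d (n + 1 - d)`. Two
words at Hamming distance `2 * k` have `k.centralBinom * (p - k).centralBinom / 2` common words at
distance `p`. Central binomial coefficients are strictly log-convex, so for `0 < k < p` this number
is largest exactly at `k = 1` and `k = p - 1`; hence a `p`-isometry preserves the folded distance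
`2`. Any odd folded distance grows to `p` in steps of `2`, so by the triangle inequality neither the
map nor its inverse can decrease one. In particular, folded distance `1` is preserved: the map is an
automorphism of the folded cube.

The folded cube is the Cayley graph of `(ℤ/2)ⁿ` with respect to the `n + 1` words consisting of the
all-ones word and the words of weight one. For `n ≥ 4` they form a Sidon set, which forces an
automorphism fixing `0` to be additive and to permute them. It is a permutation of the coordinates
if it fixes the all-ones word, and a `σ_{i,j}`-mapping otherwise. Conversely, `σ_{i,j}`-mappings
preserve the folded distance.
-/

open Finset
open scoped symmDiff

section CentralBinom

theorem centralBinom_succ_mul_lt {a b : ℕ} (hab : a < b) :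
    (a + 1).centralBinom * b.centralBinom < a.centralBinom * (b + 1).centralBinom := by
  have ha := Nat.succ_mul_centralBinom_succ a
  have hb := Nat.succ_mul_centralBinom_succ b
  have hratio : 2 * (2 * a + 1) * (b + 1) < 2 * (2 * b + 1) * (a + 1) := by nlinarith
  have hpos : 0 < a.centralBinom * b.centralBinom :=
    Nat.mul_pos a.centralBinom_pos b.centralBinom_pos
  refine lt_of_mul_lt_mul_left (a := (a + 1) * (b + 1)) ?_ (Nat.zero_le _)
  calc (a + 1) * (b + 1) * ((a + 1).centralBinom * b.centralBinom)
      = 2 * (2 * a + 1) * (b + 1) * (a.centralBinom * b.centralBinom) := by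
        linear_combination (b + 1) * b.centralBinom * ha
    _ < 2 * (2 * b + 1) * (a + 1) * (a.centralBinom * b.centralBinom) :=
        Nat.mul_lt_mul_of_pos_right hratio hpos
    _ = (a + 1) * (b + 1) * (a.centralBinom * (b + 1).centralBinom) := by
        linear_combination -((a + 1) * a.centralBinom * hb)

theorem centralBinom_add_mul_lt {a b c : ℕ} (hab : a < b) (hc : 0 < c) :
    (a + c).centralBinom * b.centralBinom < a.centralBinom * (b + c).centralBinom := by
  induction c, hc using Nat.le_induction with
  | base => exact centralBinom_succ_mul_lt hab
  | succ c _ ih =>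
    have hstep := centralBinom_succ_mul_lt (Nat.add_lt_add_right hab c)
    refine lt_of_mul_lt_mul_left (a := (b + c).centralBinom) ?_ (Nat.zero_le _)
    calc (b + c).centralBinom * ((a + c + 1).centralBinom * b.centralBinom)
        = b.centralBinom * ((a + c + 1).centralBinom * (b + c).centralBinom) := by ring
      _ < b.centralBinom * ((a + c).centralBinom * (b + c + 1).centralBinom) :=
          Nat.mul_lt_mul_of_pos_left hstep b.centralBinom_pos
      _ = (b + c + 1).centralBinom * ((a + c).centralBinom * b.centralBinom) := by ring
      _ ≤ (b + c + 1).centralBinom * (a.centralBinom * (b + c).centralBinom) :=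
          Nat.mul_le_mul_left _ ih.le
      _ = (b + c).centralBinom * (a.centralBinom * (b + c + 1).centralBinom) := by ring

theorem two_mul_choose_two_mul_sub_one {q : ℕ} (hq : 0 < q) :
    2 * (2 * q - 1).choose q = q.centralBinom := by
  obtain ⟨r, rfl⟩ := Nat.exists_eq_add_one_of_ne_zero hq.ne'
  calc 2 * (2 * r + 1).choose (r + 1)
      = (2 * r + 1).choose r + (2 * r + 1).choose (r + 1) := by rw [Nat.choose_symm_half, two_mul]
    _ = (2 * r + 1 + 1).choose (r + 1) := (Nat.choose_succ_succ _ _).symm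
    _ = (r + 1).centralBinom := by rw [Nat.centralBinom_eq_two_mul_choose, mul_add_one]

end CentralBinom

theorem card_filter_card_inter_card_sdiff {α : Type*} [Fintype α] [DecidableEq α] (S : Finset α)
    (a b : ℕ) :
    #{T : Finset α | #(T ∩ S) = a ∧ #(T \ S) = b} = (#S).choose a * (#Sᶜ).choose b := by
  have hparts : ∀ A ⊆ S, ∀ B ⊆ Sᶜ, (A ∪ B) ∩ S = A ∧ (A ∪ B) \ S = B := by
    intro A hA B hB
    rw [subset_compl_iff_disjoint_right] at hB
    rw [union_inter_distrib_right, union_sdiff_distrib, inter_eq_left.2 hA,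
      disjoint_iff_inter_eq_empty.1 hB, sdiff_eq_empty_iff_subset.2 hA, hB.sdiff_eq_left,
      union_empty, empty_union]
    exact ⟨rfl, rfl⟩
  rw [← card_powersetCard, ← card_powersetCard, ← card_product]
  refine card_nbij' (fun T => (T ∩ S, T \ S)) (fun P => P.1 ∪ P.2) ?_ ?_ ?_ ?_
  · intro T hT
    obtain ⟨hinter, hsdiff⟩ := (mem_filter_univ _).1 hT
    exact mem_product.2 ⟨mem_powersetCard.2 ⟨inter_subset_right, hinter⟩,
      mem_powersetCard.2 ⟨fun _ h => mem_compl.2 (mem_sdiff.1 h).2, hsdiff⟩⟩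
  · rintro ⟨A, B⟩ hAB
    simp only [coe_product, Set.mem_prod, mem_coe, mem_powersetCard] at hAB
    obtain ⟨⟨hA, rfl⟩, hB, rfl⟩ := hAB
    simp [hparts A hA B hB]
  · intro T _
    exact (union_comm _ _).trans (sdiff_union_inter T S)
  · rintro ⟨A, B⟩ hAB
    simp only [coe_product, Set.mem_prod, mem_coe, mem_powersetCard] at hAB
    obtain ⟨⟨hA, -⟩, hB, -⟩ := hAB
    exact Prod.ext (hparts A hA B hB).1 (hparts A hA B hB).2

section Disagreement

variable {ι : Type*} [Fintype ι] {x y : ι → ZMod 2}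

/-- The set of coordinates in which two words differ; its cardinality is their Hamming distance. -/
def disagreement (x y : ι → ZMod 2) : Finset ι := {a | x a ≠ y a}

@[simp] theorem mem_disagreement {a : ι} : a ∈ disagreement x y ↔ x a ≠ y a := by
  simp [disagreement]

theorem card_disagreement (x y : ι → ZMod 2) : #(disagreement x y) = hammingDist x y := rfl

theorem disagreement_add_one (x : ι → ZMod 2) : disagreement x (x + 1) = univ := by
  ext b
  simp

theorem disagreement_bijective (x : ι → ZMod 2) : Function.Bijective (disagreement x) := by
  classical
  refine ⟨fun y z h => ?_, fun T => ⟨fun a => if a ∈ T then x a + 1 else x a, ?_⟩⟩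
  · have hbit : ∀ r s t : ZMod 2, (r ≠ s ↔ r ≠ t) → s = t := by decide
    funext a
    exact hbit (x a) (y a) (z a) (by rw [← mem_disagreement, h, mem_disagreement])
  · ext a
    by_cases h : a ∈ T <;> simp [h]

variable [DecidableEq ι]

theorem disagreement_symmDiff_disagreement (x y z : ι → ZMod 2) :
    disagreement x y ∆ disagreement x z = disagreement y z := by
  have hbit : ∀ r s t : ZMod 2, (r ≠ s ∧ ¬r ≠ t ∨ r ≠ t ∧ ¬r ≠ s) ↔ s ≠ t := by decide
  ext a
  simpa [mem_symmDiff] using hbit (x a) (y a) (z a)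

theorem disagreement_add_single (x : ι → ZMod 2) (a : ι) :
    disagreement x (x + Pi.single a 1) = {a} := by
  ext b
  by_cases h : b = a <;> simp [h]

theorem hammingDist_add_hammingDist_add_hammingDist (x y z : ι → ZMod 2) :
    hammingDist x y + hammingDist x z + hammingDist y z
      = 2 * #(disagreement x y ∪ disagreement x z) := by
  have hunion := card_union_add_card_inter (disagreement x y) (disagreement x z)
  have hsymm : #(disagreement x y ∆ disagreement x z) + #(disagreement x y ∩ disagreement x z)
      = #(disagreement x y ∪ disagreement x z) := by
    rw [← card_union_of_disjoint (disjoint_symmDiff_inf _ _)]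
    congr 1
    exact symmDiff_sup_inf _ _
  rw [disagreement_symmDiff_disagreement] at hsymm
  simp only [card_disagreement] at hunion hsymm
  omega

/-- The words lying at Hamming distance `p` from both `x` and `y`. -/
def equidistantWords (p : ℕ) (x y : ι → ZMod 2) : Finset (ι → ZMod 2) :=
  {z | hammingDist x z = p ∧ hammingDist y z = p}

theorem mem_equidistantWords {p : ℕ} {z : ι → ZMod 2} :
    z ∈ equidistantWords p x y ↔ hammingDist x z = p ∧ hammingDist y z = p := by
  simp [equidistantWords]

theorem card_equidistantWords {k p : ℕ} (hk : k ≤ p) (h : hammingDist x y = 2 * k) :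
    #(equidistantWords p x y) = (2 * k).choose k * (Fintype.card ι - 2 * k).choose (p - k) := by
  have hS : #(disagreement x y) = 2 * k := h
  rw [← hS, ← card_compl, ← card_filter_card_inter_card_sdiff]
  refine card_bijective (disagreement x) (disagreement_bijective x) fun z => ?_
  rw [mem_equidistantWords, mem_filter_univ]
  have hT := card_inter_add_card_sdiff (disagreement x z) (disagreement x y)
  have hperimeter := hammingDist_add_hammingDist_add_hammingDist x y z
  have hunion := card_union_add_card_inter (disagreement x y) (disagreement x z)
  rw [inter_comm] at hunion
  simp only [card_disagreement] at hT hunion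
  omega

theorem two_mul_card_equidistantWords {k p : ℕ} (hp : Fintype.card ι + 1 = 2 * p) (hk : k < p)
    (h : hammingDist x y = 2 * k) :
    2 * #(equidistantWords p x y) = k.centralBinom * (p - k).centralBinom := by
  have hcompl : Fintype.card ι - 2 * k = 2 * (p - k) - 1 := by omega
  rw [card_equidistantWords hk.le h, hcompl,
    ← two_mul_choose_two_mul_sub_one (Nat.sub_pos_of_lt hk), Nat.centralBinom_eq_two_mul_choose]
  ring

end Disagreement

section Additive

/-- Sidon sets of a group of exponent two: a nonzero element is a sum of two elements of `T` in at
most one way, up to order. Sums of equal elements vanish, so `s ≠ t` has to be required. -/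
def IsSidonSet {H : Type*} [Add H] (T : Set H) : Prop :=
  ∀ ⦃s⦄, s ∈ T → ∀ ⦃t⦄, t ∈ T → ∀ ⦃u⦄, u ∈ T → ∀ ⦃v⦄, v ∈ T →
    s ≠ t → s + t = u + v → u = s ∨ u = t

variable {G H : Type*} [AddCommGroup G] [Module (ZMod 2) G] [AddCommGroup H] [Module (ZMod 2) H]
  {S : Set G} {T : Set H} {φ : G → H}

theorem IsSidonSet.map_add_add_map_eq (hT : IsSidonSet T)
    (hφ : Function.Injective φ) (hST : ∀ x, ∀ s ∈ S, φ (x + s) + φ x ∈ T)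
    {s t : G} (hs : s ∈ S) (ht : t ∈ S) (x : G) :
    φ (x + s + t) + φ (x + s) = φ (x + t) + φ x := by
  rcases eq_or_ne s t with rfl | hst
  · rw [add_assoc, ZModModule.add_self, add_zero, add_comm]
  · have hne : φ (x + s + t) + φ (x + s) ≠ φ (x + s) + φ x := by
      intro h
      have hback : x + s + t = x := hφ (add_right_cancel (h.trans (add_comm _ _)))
      rw [add_assoc, add_eq_left, ← ZModModule.sub_eq_add, sub_eq_zero] at hback
      exact hst hback
    have hne' : φ (x + t) ≠ φ (x + s) := fun h => hst (add_left_cancel (hφ h)).symm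
    -- The two paths round the square `x, x + s, x + s + t, x + t` give two sums of elements of `T`.
    have hsq : φ (x + s + t) + φ (x + s) + (φ (x + s) + φ x)
        = φ (x + t) + φ x + (φ (x + t + s) + φ (x + t)) := by
      rw [ZModModule.add_add_add_cancel, add_right_comm x t s,
        add_comm (φ (x + t) + φ x), ZModModule.add_add_add_cancel]
    rcases hT (hST (x + s) t ht) (hST x s hs) (hST x t ht) (hST (x + t) s hs) hne hsq with h | h
    · exact h.symm
    · exact absurd (add_right_cancel h) hne'

theorem IsSidonSet.map_add (hT : IsSidonSet T)
    (hS : AddSubmonoid.closure S = ⊤) (hφ : Function.Injective φ) (hzero : φ 0 = 0)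
    (hST : ∀ x, ∀ s ∈ S, φ (x + s) + φ x ∈ T) (x y : G) : φ (x + y) = φ x + φ y := by
  have hgen : ∀ x, ∀ t ∈ S, φ (x + t) = φ x + φ t := by
    intro x t ht
    rw [← sub_eq_iff_eq_add', ZModModule.sub_eq_add]
    induction x using AddSubmonoid.induction_of_closure_eq_top_right hS with
    | zero => rw [zero_add, hzero, add_zero]
    | add_right x s hs ih => rw [hT.map_add_add_map_eq hφ hST hs ht, ih]
  induction y using AddSubmonoid.induction_of_closure_eq_top_right hS with
  | zero => rw [hzero, add_zero, add_zero]
  | add_right y t ht ih => rw [← add_assoc, hgen _ t ht, ih, hgen y t ht, add_assoc]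

end Additive

section FoldedGen

variable {ι : Type*}

/-- The parametrization of words by subsets of `Option ι`, extending `s ↦ foldedGen s`: a subset and
its complement name the same word. -/
def foldHom : (Option ι → ZMod 2) →+ ι → ZMod 2 where
  toFun w b := w none + w (some b)
  map_zero' := by ext; simp
  map_add' w w' := by ext; simp [add_add_add_comm]

theorem eq_of_foldHom_eq {w w' : Option ι → ZMod 2} {b : Option ι} (h : foldHom w = foldHom w')
    (hb : w b = w' b) : w = w' := by
  have hsome : ∀ a, w none + w (some a) = w' none + w' (some a) := congrFun h
  have hnone : w none = w' none := by
    cases b with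
    | none => exact hb
    | some a => exact add_right_cancel (hb ▸ hsome a)
  funext s
  cases s with
  | none => exact hnone
  | some a => exact add_left_cancel (hnone ▸ hsome a)

variable [DecidableEq ι]

/-- The connection set of the folded cube as a Cayley graph: the all-ones word, indexed by `none`,
and the words of weight one. -/
def foldedGen : Option ι → ι → ZMod 2
  | none => 1
  | some a => Pi.single a 1

theorem foldHom_single_one (s : Option ι) : foldHom (Pi.single s 1) = foldedGen s := by
  ext b
  cases s <;> simp [foldHom, foldedGen, Pi.single_apply]

theorem foldedGen_injective [Nontrivial ι] : Function.Injective (foldedGen : Option ι → _) := by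
  have hne : ∀ a : ι, (1 : ι → ZMod 2) ≠ Pi.single a 1 := fun a h => by
    obtain ⟨b, hb⟩ := exists_ne a
    simpa [hb] using congrFun h b
  rintro (_ | a) (_ | b) h
  · rfl
  · exact absurd h (hne b)
  · exact absurd h.symm (hne a)
  · by_contra hab
    simpa [foldedGen, show a ≠ b from fun h => hab (h ▸ rfl)] using congrFun h a

theorem isSidonSet_range_foldedGen [Fintype ι] (hι : 4 ≤ Fintype.card ι) :
    IsSidonSet (Set.range (foldedGen : Option ι → _)) := by
  rintro _ ⟨s, rfl⟩ _ ⟨t, rfl⟩ _ ⟨u, rfl⟩ _ ⟨v, rfl⟩ hst h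
  obtain ⟨b, -, hb⟩ : ∃ b ∈ univ, b ∉ ({s, t, u, v} : Finset (Option ι)) := by
    refine exists_mem_notMem_of_card_lt_card (card_le_four.trans_lt ?_)
    rw [card_univ, Fintype.card_option]
    omega
  simp only [mem_insert, mem_singleton, not_or] at hb
  obtain ⟨hbs, hbt, hbu, hbv⟩ := hb
  simp only [← foldHom_single_one, ← map_add] at h
  -- Both lifts to `Option ι` vanish at `b`, so they are equal rather than complementary.
  have hlift := eq_of_foldHom_eq (b := b) h (by simp [hbs, hbt, hbu, hbv])
  have hs := congrFun hlift s
  have hu := congrFun hlift u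
  have hst' : s ≠ t := fun h => hst (h ▸ rfl)
  by_contra! hne
  have hus : u ≠ s := fun h => hne.1 (h ▸ rfl)
  have hut : u ≠ t := fun h => hne.2 (h ▸ rfl)
  rcases eq_or_ne u v with rfl | huv
  · simp [hst', hus.symm] at hs
  · simp [hus, hut, huv] at hu

theorem closure_range_single_one [Finite ι] :
    AddSubmonoid.closure (Set.range fun a : ι => (Pi.single a 1 : ι → ZMod 2)) = ⊤ := by
  cases nonempty_fintype ι
  refine top_unique fun x _ => ?_
  rw [← univ_sum_single x]
  refine sum_mem fun a _ => ?_
  have hbit : ∀ r : ZMod 2, r = 0 ∨ r = 1 := by decide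
  rcases hbit (x a) with ha | ha
  · simp [ha]
  · exact ha ▸ AddSubmonoid.subset_closure (Set.mem_range_self a)

theorem addMonoidHom_eq_of_map_single_one [Finite ι] {M : Type*} [AddMonoid M]
    {f g : (ι → ZMod 2) →+ M} (h : ∀ a, f (Pi.single a 1) = g (Pi.single a 1)) : f = g :=
  AddMonoidHom.eq_of_eqOn_denseM closure_range_single_one (Set.forall_mem_range.2 h)

theorem closure_range_foldedGen [Finite ι] :
    AddSubmonoid.closure (Set.range (foldedGen : Option ι → _)) = ⊤ :=
  top_unique <| closure_range_single_one.symm.trans_le <| AddSubmonoid.closure_mono <|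
    Set.range_subset_iff.2 fun a => ⟨some a, rfl⟩

end FoldedGen

section FoldedDist

variable {ι : Type*} [Fintype ι] {x y z : ι → ZMod 2} {p : ℕ}

/-- The distance of the folded cube: the graph on the words of length `n` in which `x` is adjacent
to the words at Hamming distance `1` or `n` from `x`. -/
def foldedDist (x y : ι → ZMod 2) : ℕ :=
  min (hammingDist x y) (Fintype.card ι + 1 - hammingDist x y)

theorem foldedDist_eq_zero : foldedDist x y = 0 ↔ x = y := by
  have hle : hammingDist x y ≤ Fintype.card ι := hammingDist_le_card_fintype
  rw [← hammingDist_eq_zero, foldedDist]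
  omega

theorem foldedDist_eq_iff_hammingDist_eq (hp : Fintype.card ι + 1 = 2 * p) :
    foldedDist x y = p ↔ hammingDist x y = p := by
  rw [foldedDist]
  omega

theorem foldedDist_le (hp : Fintype.card ι + 1 = 2 * p) (x y : ι → ZMod 2) :
    foldedDist x y ≤ p := by
  rw [foldedDist]
  omega

theorem foldedDist_triangle (x y z : ι → ZMod 2) :
    foldedDist x z ≤ foldedDist x y + foldedDist y z := by
  classical
  have hperimeter := hammingDist_add_hammingDist_add_hammingDist x y z
  have hunion := card_le_univ (disagreement x y ∪ disagreement x z)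
  have hxz := hammingDist_triangle x y z
  have hxy := hammingDist_triangle_right x y z
  have hyz := hammingDist_triangle_left y z x
  simp only [foldedDist]
  omega

theorem even_foldedDist_add_foldedDist_add_foldedDist (hp : Even (Fintype.card ι + 1))
    (x y z : ι → ZMod 2) : Even (foldedDist x y + foldedDist x z + foldedDist y z) := by
  classical
  have hperimeter := hammingDist_add_hammingDist_add_hammingDist x y z
  have hxy : hammingDist x y ≤ Fintype.card ι := hammingDist_le_card_fintype
  have hxz : hammingDist x z ≤ Fintype.card ι := hammingDist_le_card_fintype
  have hyz : hammingDist y z ≤ Fintype.card ι := hammingDist_le_card_fintype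
  rw [Nat.even_iff] at hp ⊢
  simp only [foldedDist]
  omega

theorem foldedDist_eq_one_iff [DecidableEq ι] [Nonempty ι] :
    foldedDist x y = 1 ↔ ∃ s, y = x + foldedGen s := by
  have hcard : 0 < Fintype.card ι := Fintype.card_pos
  have hle : hammingDist x y ≤ Fintype.card ι := hammingDist_le_card_fintype
  have hfold : foldedDist x y = 1 ↔ hammingDist x y = Fintype.card ι ∨ hammingDist x y = 1 := by
    rw [foldedDist]
    omega
  have hinj := (disagreement_bijective x).injective
  rw [hfold, ← card_disagreement, card_eq_iff_eq_univ, card_eq_one, ← disagreement_add_one x,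
    hinj.eq_iff]
  simp only [← disagreement_add_single x, hinj.eq_iff, Option.exists, foldedGen]

theorem exists_foldedDist_eq_add_two (hp : Fintype.card ι + 1 = 2 * p)
    (h : foldedDist x y + 2 ≤ p) :
    ∃ z, foldedDist x z = foldedDist x y + 2 ∧ foldedDist y z = 2 := by
  classical
  have hle : hammingDist x y ≤ Fintype.card ι := hammingDist_le_card_fintype
  have hyx : #(disagreement y x) = hammingDist x y := hammingDist_comm y x
  rw [foldedDist] at h
  obtain ⟨T, hT, hdist⟩ : ∃ T : Finset ι, #T = 2 ∧
      (#(disagreement y x ∆ T) = hammingDist x y + 2 ∧ hammingDist x y ≤ p ∨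
        #(disagreement y x ∆ T) + 2 = hammingDist x y ∧ p < hammingDist x y) := by
    rcases le_or_gt (hammingDist x y) p with hnear | hfar
    · obtain ⟨T, hTsub, hT⟩ := exists_subset_card_eq (s := (disagreement y x)ᶜ) (n := 2)
        (by rw [card_compl]; omega)
      have hdisj := (subset_compl_iff_disjoint_right.1 hTsub).symm
      refine ⟨T, hT, .inl ⟨?_, hnear⟩⟩
      rw [hdisj.symmDiff_eq_sup, sup_eq_union, card_union_of_disjoint hdisj, hyx, hT]
    · obtain ⟨T, hTsub, hT⟩ := exists_subset_card_eq (s := disagreement y x) (n := 2) (by omega)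
      refine ⟨T, hT, .inr ⟨?_, hfar⟩⟩
      rw [symmDiff_of_ge hTsub, ← hyx, ← card_sdiff_add_card_eq_card hTsub, hT]
  obtain ⟨z, rfl⟩ := (disagreement_bijective y).surjective T
  rw [disagreement_symmDiff_disagreement, card_disagreement] at hdist
  rw [card_disagreement] at hT
  refine ⟨z, ?_⟩
  simp only [foldedDist]
  omega

end FoldedDist

section PreservingMaps

variable {ι : Type*} [Fintype ι] {p : ℕ}

section EquidistantWords

variable [DecidableEq ι] {x y : ι → ZMod 2}

theorem two_mul_card_equidistantWords_of_foldedDist_eq_two (hp : Fintype.card ι + 1 = 2 * p)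
    (h : foldedDist x y = 2) :
    2 * #(equidistantWords p x y) = Nat.centralBinom 1 * (p - 1).centralBinom := by
  have hp2 : 2 ≤ p := h ▸ foldedDist_le hp x y
  have hdist : hammingDist x y = 2 * 1 ∨ hammingDist x y = 2 * (p - 1) := by
    rw [foldedDist] at h
    omega
  rcases hdist with hdist | hdist
  · exact two_mul_card_equidistantWords hp (by omega) hdist
  · rw [two_mul_card_equidistantWords hp (by omega) hdist, mul_comm, Nat.sub_sub_self (by omega)]

theorem foldedDist_eq_two_of_le_two_mul_card_equidistantWords (hp : Fintype.card ι + 1 = 2 * p)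
    (hxy : x ≠ y)
    (h : Nat.centralBinom 1 * (p - 1).centralBinom ≤ 2 * #(equidistantWords p x y)) :
    foldedDist x y = 2 := by
  have hpos : 0 < Nat.centralBinom 1 * (p - 1).centralBinom :=
    Nat.mul_pos (Nat.centralBinom_pos _) (Nat.centralBinom_pos _)
  obtain ⟨z, hz⟩ : (equidistantWords p x y).Nonempty := card_pos.1 (by omega)
  obtain ⟨hxz, hyz⟩ := mem_equidistantWords.1 hz
  have hperimeter := hammingDist_add_hammingDist_add_hammingDist x y z
  obtain ⟨k, hk⟩ : ∃ k, hammingDist x y = 2 * k := ⟨hammingDist x y / 2, by omega⟩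
  have hle : hammingDist x y ≤ Fintype.card ι := hammingDist_le_card_fintype
  have hk0 : 0 < hammingDist x y := hammingDist_pos.2 hxy
  have hkp : k < p := by omega
  have hextreme : k = 1 ∨ k = p - 1 := by
    by_contra! hmiddle
    have hlt := centralBinom_add_mul_lt (a := 1) (b := p - k) (c := k - 1) (by omega) (by omega)
    rw [show 1 + (k - 1) = k by omega, show p - k + (k - 1) = p - 1 by omega,
      ← two_mul_card_equidistantWords hp hkp hk] at hlt
    exact hlt.not_ge h
  rw [foldedDist]
  omega

end EquidistantWords

section Maps

variable {φ : (ι → ZMod 2) → ι → ZMod 2} {x y : ι → ZMod 2}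

theorem foldedDist_map_eq_two (hp : Fintype.card ι + 1 = 2 * p) (hφ : Function.Injective φ)
    (hdist : ∀ x y, hammingDist x y = p → hammingDist (φ x) (φ y) = p)
    (hxy : foldedDist x y = 2) : foldedDist (φ x) (φ y) = 2 := by
  classical
  have hne : x ≠ y := fun h => by simp [foldedDist_eq_zero.2 h] at hxy
  refine foldedDist_eq_two_of_le_two_mul_card_equidistantWords hp (hφ.ne hne) ?_
  rw [← two_mul_card_equidistantWords_of_foldedDist_eq_two hp hxy]
  refine Nat.mul_le_mul_left 2 (card_le_card_of_injOn φ (fun z hz => ?_) hφ.injOn)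
  obtain ⟨hxz, hyz⟩ := mem_equidistantWords.1 hz
  exact mem_equidistantWords.2 ⟨hdist x z hxz, hdist y z hyz⟩

theorem foldedDist_le_foldedDist_map (hp : Fintype.card ι + 1 = 2 * p)
    (htwo : ∀ x y, foldedDist x y = 2 → foldedDist (φ x) (φ y) = 2)
    (hdist : ∀ x y, foldedDist x y = p → foldedDist (φ x) (φ y) = p)
    (hxy : Even (foldedDist x y + p)) :
    foldedDist x y ≤ foldedDist (φ x) (φ y) ∧ Even (foldedDist (φ x) (φ y) + p) := by
  obtain ⟨s, hs⟩ : ∃ s, foldedDist x y + 2 * s = p := by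
    have hle := foldedDist_le hp x y
    rw [Nat.even_iff] at hxy
    exact ⟨(p - foldedDist x y) / 2, by omega⟩
  clear hxy
  induction s generalizing y with
  | zero =>
    have hmap := hdist x y hs
    exact ⟨by omega, by simp [hmap]⟩
  | succ s ih =>
    obtain ⟨z, hxz, hyz⟩ := exists_foldedDist_eq_add_two (x := x) (y := y) hp (by omega)
    obtain ⟨hexpand, hparity⟩ := ih (y := z) (by omega)
    have hmap := htwo y z hyz
    have htri := foldedDist_triangle (φ x) (φ y) (φ z)
    have hperimeter :=
      even_foldedDist_add_foldedDist_add_foldedDist (by simp [hp]) (φ x) (φ y) (φ z)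
    rw [Nat.even_iff] at hparity hperimeter ⊢
    omega

end Maps

theorem symm_rel_of_forall_rel {α : Type*} [Finite α] {r : α → α → Prop} (φ : Equiv.Perm α)
    (hφ : ∀ x y, r x y → r (φ x) (φ y)) {x y : α} (h : r x y) : r (φ.symm x) (φ.symm y) :=
  Equiv.Perm.perm_symm_mapsTo_of_mapsTo (φ.prodCongr φ) (s := {q : α × α | r q.1 q.2})
    (fun q hq => hφ q.1 q.2 hq) (x := (x, y)) h

theorem foldedDist_map_of_even (hp : Fintype.card ι + 1 = 2 * p)
    (φ : Equiv.Perm (ι → ZMod 2))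
    (hdist : ∀ x y, hammingDist x y = p → hammingDist (φ x) (φ y) = p) {x y : ι → ZMod 2}
    (hxy : Even (foldedDist x y + p)) : foldedDist (φ x) (φ y) = foldedDist x y := by
  have expand : ∀ ψ : Equiv.Perm (ι → ZMod 2),
      (∀ x y, hammingDist x y = p → hammingDist (ψ x) (ψ y) = p) →
      ∀ x y, Even (foldedDist x y + p) →
        foldedDist x y ≤ foldedDist (ψ x) (ψ y) ∧ Even (foldedDist (ψ x) (ψ y) + p) := by
    intro ψ hψ x y
    refine foldedDist_le_foldedDist_map hp
      (fun x y => foldedDist_map_eq_two hp ψ.injective hψ) (fun x y => ?_)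
    simpa only [foldedDist_eq_iff_hammingDist_eq hp] using hψ x y
  obtain ⟨hle, hparity⟩ := expand φ hdist x y hxy
  have hge := (expand φ.symm (fun _ _ => symm_rel_of_forall_rel φ hdist) _ _ hparity).1
  rw [φ.symm_apply_apply, φ.symm_apply_apply] at hge
  exact hge.antisymm hle

end PreservingMaps

section FoldedDistOne

variable {ι : Type*} [Fintype ι] {φ : (ι → ZMod 2) → ι → ZMod 2}

theorem map_add_of_foldedDist_map_eq_one (hι : 4 ≤ Fintype.card ι) (hφ : Function.Injective φ)
    (hzero : φ 0 = 0) (hone : ∀ x y, foldedDist x y = 1 → foldedDist (φ x) (φ y) = 1)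
    (x y : ι → ZMod 2) : φ (x + y) = φ x + φ y := by
  classical
  have : Nonempty ι := Fintype.card_pos_iff.1 (by omega)
  refine (isSidonSet_range_foldedGen hι).map_add closure_range_foldedGen hφ hzero ?_ x y
  rintro x _ ⟨s, rfl⟩
  obtain ⟨t, ht⟩ := foldedDist_eq_one_iff.1 (hone _ _ (foldedDist_eq_one_iff.2 ⟨s, rfl⟩))
  exact ⟨t, by rw [ht, add_comm, ← add_assoc, ZModModule.add_self, zero_add]⟩

variable [DecidableEq ι]

theorem exists_perm_map_foldedGen_eq [Nontrivial ι] (hφ : Function.Injective φ)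
    (hzero : φ 0 = 0) (hone : ∀ x y, foldedDist x y = 1 → foldedDist (φ x) (φ y) = 1) :
    ∃ π : Equiv.Perm (Option ι), ∀ s, φ (foldedGen s) = foldedGen (π s) := by
  have himage : ∀ s, ∃ t, φ (foldedGen s) = foldedGen t := by
    intro s
    simpa [hzero] using
      foldedDist_eq_one_iff.1 (hone 0 _ (foldedDist_eq_one_iff.2 ⟨s, (zero_add _).symm⟩))
  choose π hπ using himage
  have hinj : Function.Injective π := fun s t h =>
    foldedGen_injective (hφ (by rw [hπ, hπ, h]))
  exact ⟨.ofBijective π (Finite.injective_iff_bijective.1 hinj), hπ⟩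

theorem hammingDist_map_of_map_foldedGen_eq (f : (ι → ZMod 2) →+ ι → ZMod 2)
    (π : Equiv.Perm (Option ι)) (hπ : ∀ s, f (foldedGen s) = foldedGen (π s))
    (hnone : π none = none) (x y : ι → ZMod 2) : hammingDist (f x) (f y) = hammingDist x y := by
  obtain ⟨e, he⟩ : ∃ e : Equiv.Perm ι, ∀ a, some (e a) = π (some a) := by
    refine ⟨Equiv.removeNone π, fun a => Equiv.removeNone_some _ ?_⟩
    rw [← Option.ne_none_iff_exists', ← hnone]
    exact π.injective.ne (Option.some_ne_none a)
  have hf : f = (LinearMap.funLeft (ZMod 2) (ZMod 2) e.symm).toAddMonoidHom := by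
    refine addMonoidHom_eq_of_map_single_one fun a => ?_
    have ha : f (Pi.single a 1) = Pi.single (e a) 1 := by
      simpa only [← he, foldedGen] using hπ (some a)
    funext b
    simp [ha, LinearMap.funLeft_apply, Pi.single_apply, Equiv.symm_apply_eq]
  have happly : ∀ c, f c = c ∘ e.symm := fun c => by
    rw [hf]
    rfl
  rw [happly, happly]
  exact card_equiv e.symm (by simp)

end FoldedDistOne

section SigmaMap

variable {n : ℕ} {i j : Fin n} (σ : {k : Fin n // k ≠ i} ≃ {k : Fin n // k ≠ j})

theorem sigmaMap_apply_target (c : Fin n → ZMod 2) : sigmaMap n i j σ c j = c i := by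
  simp [sigmaMap]

theorem sigmaMap_apply_coe (c : Fin n → ZMod 2) (k : {k : Fin n // k ≠ j}) :
    sigmaMap n i j σ c k = c (σ.symm k) + c i := by
  simp [sigmaMap, k.2]

theorem sigmaMap_add (x y : Fin n → ZMod 2) :
    sigmaMap n i j σ (x + y) = sigmaMap n i j σ x + sigmaMap n i j σ y := by
  ext k
  by_cases h : k = j <;> simp [sigmaMap, h, add_add_add_comm]

theorem sigmaMap_single_source : sigmaMap n i j σ (Pi.single i 1) = 1 := by
  ext k
  by_cases h : k = j <;> simp [sigmaMap, h, (σ.symm _).2]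

theorem sigmaMap_single_coe (k : {k : Fin n // k ≠ i}) :
    sigmaMap n i j σ (Pi.single k.1 1) = Pi.single (σ k).1 1 := by
  ext l
  by_cases h : l = j
  · simp [sigmaMap, h, k.2.symm, (σ k).2.symm]
  · have hiff : (σ.symm ⟨l, h⟩).1 = k ↔ l = σ k := by
      rw [Subtype.coe_inj, Equiv.symm_apply_eq, Subtype.ext_iff]
    simp [sigmaMap, h, k.2.symm, Pi.single_apply, hiff]

theorem hammingDist_eq_ite_add_card {ι : Type*} [Fintype ι] [DecidableEq ι] (x y : ι → ZMod 2)
    (i : ι) : hammingDist x y = (if x i = y i then 0 else 1) + #{k : {k // k ≠ i} | x k ≠ y k} := by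
  rw [hammingDist, card_filter, card_filter, Fintype.sum_eq_add_sum_subtype_ne _ i]
  simp only [ite_not, ne_eq]

theorem card_filter_sigmaMap_ne (x y : Fin n → ZMod 2) :
    #{k : {k // k ≠ j} | sigmaMap n i j σ x k ≠ sigmaMap n i j σ y k}
      = #{k : {k // k ≠ i} | x k + x i ≠ y k + y i} :=
  card_equiv σ.symm (by simp [sigmaMap_apply_coe])

theorem foldedDist_sigmaMap (x y : Fin n → ZMod 2) :
    foldedDist (sigmaMap n i j σ x) (sigmaMap n i j σ y) = foldedDist x y := by
  have hx := hammingDist_eq_ite_add_card x y i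
  have hσ := hammingDist_eq_ite_add_card (sigmaMap n i j σ x) (sigmaMap n i j σ y) j
  rw [card_filter_sigmaMap_ne, sigmaMap_apply_target, sigmaMap_apply_target] at hσ
  by_cases hi : x i = y i
  · simp only [hi, ne_eq, add_left_inj, if_true] at hx hσ
    rw [foldedDist, foldedDist, hσ, hx]
  · have hbit : ∀ r s t u : ZMod 2, r ≠ s → (t + r ≠ u + s ↔ ¬t ≠ u) := by decide
    have hcard := card_filter_add_card_filter_not (s := univ) fun k : {k // k ≠ i} => x k ≠ y k
    simp only [hi, hbit _ _ _ _ hi, if_false] at hx hσ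
    rw [card_univ, Fintype.card_subtype_compl, Fintype.card_subtype_eq] at hcard
    rw [Fintype.card_fin] at hcard
    simp only [foldedDist, Fintype.card_fin]
    omega

theorem sigmaMap_bijective : Function.Bijective (sigmaMap n i j σ) :=
  Finite.injective_iff_bijective.1 fun x y h => by
    rw [← foldedDist_eq_zero, ← foldedDist_sigmaMap σ, h, foldedDist_eq_zero]

theorem exists_eq_sigmaMap_of_map_foldedGen_eq (f : (Fin n → ZMod 2) →+ Fin n → ZMod 2)
    (π : Equiv.Perm (Option (Fin n))) (hπ : ∀ s, f (foldedGen s) = foldedGen (π s))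
    (hnone : π none ≠ none) :
    ∃ (i j : Fin n) (σ : {k : Fin n // k ≠ i} ≃ {k : Fin n // k ≠ j}), f = sigmaMap n i j σ := by
  obtain ⟨i, hi⟩ : ∃ i, π.symm none = some i :=
    Option.ne_none_iff_exists'.1 (by rwa [Ne, Equiv.symm_apply_eq, eq_comm])
  rw [Equiv.symm_apply_eq, eq_comm] at hi
  have hsome : ∀ k ≠ i, some (Equiv.removeNone π k) = π (some k) := fun k hk =>
    Equiv.removeNone_some _ <| Option.ne_none_iff_exists'.1 <|
      hi ▸ π.injective.ne (Option.some_injective _ |>.ne hk)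
  let σ : {k // k ≠ i} ≃ {k // k ≠ Equiv.removeNone π i} :=
    (Equiv.removeNone π).subtypeEquiv fun k => (Equiv.removeNone π).injective.ne_iff.symm
  have hsingle : ∀ a, f (Pi.single a 1) = foldedGen (π (some a)) := fun a => hπ (some a)
  refine ⟨i, Equiv.removeNone π i, σ, ?_⟩
  suffices f = AddMonoidHom.mk' (sigmaMap n i _ σ) (sigmaMap_add σ) from congrArg _ this
  refine addMonoidHom_eq_of_map_single_one fun a => ?_
  rw [hsingle, AddMonoidHom.mk'_apply]
  rcases eq_or_ne a i with rfl | ha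
  · rw [hi, sigmaMap_single_source, foldedGen]
  · rw [← hsome a ha]
    exact (sigmaMap_single_coe σ ⟨a, ha⟩).symm

end SigmaMap

theorem hammingDist_map_of_card_le_one {ι : Type*} [Fintype ι] (hι : Fintype.card ι ≤ 1)
    {φ : (ι → ZMod 2) → ι → ZMod 2} (hφ : Function.Injective φ) (x y : ι → ZMod 2) :
    hammingDist (φ x) (φ y) = hammingDist x y := by
  have hxy : hammingDist x y ≤ Fintype.card ι := hammingDist_le_card_fintype
  have hφxy : hammingDist (φ x) (φ y) ≤ Fintype.card ι := hammingDist_le_card_fintype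
  have hzero : hammingDist (φ x) (φ y) = 0 ↔ hammingDist x y = 0 := by
    rw [hammingDist_eq_zero, hammingDist_eq_zero, hφ.eq_iff]
  omega

/-- For `n ≡ 1 (mod 4)`: every `(n+1)/2`-isometry of `C_n` fixing `0̄` that is not an
isometry is a `σ_{i,j}`-mapping; conversely, every `σ_{i,j}`-mapping is an
`(n+1)/2`-isometry. -/
theorem halfPlusOneIsometry_classification_one_mod_four (n : ℕ) (hn : n % 4 = 1) :
    (∀ φ : (Fin n → ZMod 2) → Fin n → ZMod 2,
      Function.Bijective φ → φ 0 = 0 →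
      (∀ x y, hammingDist x y = (n + 1) / 2 →
        hammingDist (φ x) (φ y) = (n + 1) / 2) →
      ¬(∀ x y, hammingDist (φ x) (φ y) = hammingDist x y) →
      ∃ (i j : Fin n) (σ : {k : Fin n // k ≠ i} ≃ {k : Fin n // k ≠ j}),
        φ = sigmaMap n i j σ) ∧
    (∀ (i j : Fin n) (σ : {k : Fin n // k ≠ i} ≃ {k : Fin n // k ≠ j}),
      Function.Bijective (sigmaMap n i j σ) ∧
      ∀ x y, hammingDist x y = (n + 1) / 2 →
        hammingDist (sigmaMap n i j σ x) (sigmaMap n i j σ y) = (n + 1) / 2) := by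
  have hp : Fintype.card (Fin n) + 1 = 2 * ((n + 1) / 2) := by
    rw [Fintype.card_fin]
    omega
  refine ⟨fun φ hφ hzero hdist hiso => ?_, fun i j σ => ⟨sigmaMap_bijective σ, fun x y => ?_⟩⟩
  · have hn5 : 5 ≤ n := by
      by_contra! hlt
      refine hiso (hammingDist_map_of_card_le_one ?_ hφ.injective)
      rw [Fintype.card_fin]
      omega
    have : Nontrivial (Fin n) := Fin.nontrivial_iff_two_le.2 (by omega)
    have hone : ∀ x y, foldedDist x y = 1 → foldedDist (φ x) (φ y) = 1 := by
      intro x y hxy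
      have hodd : Even (1 + (n + 1) / 2) := Nat.even_iff.2 (by omega)
      exact (foldedDist_map_of_even hp (.ofBijective φ hφ) hdist (hxy ▸ hodd)).trans hxy
    have hadd := map_add_of_foldedDist_map_eq_one (by simp; omega) hφ.injective hzero hone
    obtain ⟨π, hπ⟩ := exists_perm_map_foldedGen_eq hφ.injective hzero hone
    refine exists_eq_sigmaMap_of_map_foldedGen_eq (.mk' φ hadd) π hπ fun hnone => ?_
    exact hiso (hammingDist_map_of_map_foldedGen_eq (.mk' φ hadd) π hπ hnone)
  · rw [← foldedDist_eq_iff_hammingDist_eq hp, ← foldedDist_eq_iff_hammingDist_eq hp,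
      foldedDist_sigmaMap]
    exact id
end

section
/- Suppose n ≡ 1 (mod 4). Then every {(n−1)/2, (n+1)/2, n}-isometry of C_n fixing 0̄ is an isometry. -/
/-!
Let `n = 2m + 1`. Two words at distance `2j` have `(2j choose j) (n - 2j choose m - j)` common
points at distance `m`, and twice this number is `B j * B (m + 1 - j)`, where `B` is the central
binomial coefficient. As `B` is strictly log-convex, the product determines `j` up to the reflection
`j ↦ m + 1 - j`, so a bijection preserving distance `m` sends distance `2j` to `2j` or `n + 1 - 2j`.
For even `m`, going down from distance `m` in steps of two, the triangle and perimeter inequalities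
exclude the reflected value, and all even distances are preserved. Antipodes exchange even and odd
distances, so preserving distance `n` as well gives the odd ones.
-/

namespace BooleanCube

open Finset
open scoped symmDiff

section FinsetCard

variable {ι : Type*} [DecidableEq ι]

lemma card_symmDiff_add_two_mul_card_inter (S T : Finset ι) :
    #(S ∆ T) + 2 * #(S ∩ T) = #S + #T := by
  have hST : #(S ∆ T) = #(S \ T) + #(T \ S) :=
    card_union_of_disjoint disjoint_sdiff_sdiff
  have hS := card_sdiff_add_card_inter S T
  have hT := card_sdiff_add_card_inter T S
  rw [inter_comm] at hT
  omega

lemma union_inter_eq_left {A B Y : Finset ι} (hA : A ⊆ Y) (hB : Disjoint B Y) :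
    (A ∪ B) ∩ Y = A := by
  rw [union_inter_distrib_right, inter_eq_left.mpr hA,
    disjoint_iff_inter_eq_empty.mp hB, union_empty]

lemma union_sdiff_eq_right {A B Y : Finset ι} (hA : A ⊆ Y) (hB : Disjoint B Y) :
    (A ∪ B) \ Y = B := by
  rw [union_sdiff_distrib, sdiff_eq_empty_iff_subset.mpr hA, sdiff_eq_self_of_disjoint hB,
    empty_union]

lemma card_filter_card_inter_card_sdiff [Fintype ι] (Y : Finset ι) (a b : ℕ) :
    #{S : Finset ι | #(S ∩ Y) = a ∧ #(S \ Y) = b} = (#Y).choose a * (#Yᶜ).choose b := by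
  rw [← card_powersetCard, ← card_powersetCard, ← card_product]
  refine card_nbij' (fun S ↦ (S ∩ Y, S \ Y)) (fun p ↦ p.1 ∪ p.2) ?_ ?_ ?_ ?_
  · intro S hS
    simp_all [subset_iff]
  · rintro ⟨A, B⟩ hAB
    obtain ⟨⟨hA, rfl⟩, hB, rfl⟩ : (A ⊆ Y ∧ #A = a) ∧ Disjoint B Y ∧ #B = b := by
      simpa [subset_compl_iff_disjoint_right] using hAB
    simp [union_inter_eq_left hA hB, union_sdiff_eq_right hA hB]
  · intro S _
    exact sup_inf_sdiff S Y
  · rintro ⟨A, B⟩ hAB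
    obtain ⟨⟨hA, -⟩, hB, -⟩ : (A ⊆ Y ∧ #A = a) ∧ Disjoint B Y ∧ #B = b := by
      simpa [subset_compl_iff_disjoint_right] using hAB
    exact Prod.ext (union_inter_eq_left hA hB) (union_sdiff_eq_right hA hB)

end FinsetCard

section CentralBinom

open Nat

lemma centralBinom_succ_mul_lt {a b : ℕ} (hab : a < b) :
    centralBinom (a + 1) * centralBinom b < centralBinom a * centralBinom (b + 1) := by
  have ha := succ_mul_centralBinom_succ a
  have hb := succ_mul_centralBinom_succ b
  have hpos := Nat.mul_pos (centralBinom_pos a) (centralBinom_pos b)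
  refine lt_of_mul_lt_mul_left (a := (a + 1) * (b + 1)) ?_ (Nat.zero_le _)
  calc (a + 1) * (b + 1) * (centralBinom (a + 1) * centralBinom b)
      = (b + 1) * (2 * (2 * a + 1)) * (centralBinom a * centralBinom b) := by
        linear_combination (b + 1) * centralBinom b * ha
    _ < (a + 1) * (2 * (2 * b + 1)) * (centralBinom a * centralBinom b) :=
        Nat.mul_lt_mul_of_pos_right (by nlinarith) hpos
    _ = (a + 1) * (b + 1) * (centralBinom a * centralBinom (b + 1)) := by
        rw [mul_mul_mul_comm (a + 1) (b + 1), hb]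
        ring

lemma centralBinom_add_mul_lt (a : ℕ) {b d : ℕ} (hd : d ≠ 0) (hb : a + d ≤ b) :
    centralBinom (a + d) * centralBinom b < centralBinom a * centralBinom (b + d) := by
  induction d, Nat.one_le_iff_ne_zero.mpr hd using Nat.le_induction generalizing b with
  | base => exact centralBinom_succ_mul_lt hb
  | succ d hd ih =>
    calc centralBinom (a + d + 1) * centralBinom b
        < centralBinom (a + d) * centralBinom (b + 1) := centralBinom_succ_mul_lt hb
      _ < centralBinom a * centralBinom (b + 1 + d) := ih (by omega) (by omega)
      _ = centralBinom a * centralBinom (b + (d + 1)) := by rw [add_assoc, add_comm 1 d]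

lemma eq_or_eq_of_centralBinom_mul_eq {a b c e : ℕ} (hsum : a + b = c + e)
    (hmul : centralBinom a * centralBinom b = centralBinom c * centralBinom e) :
    a = c ∨ a = e := by
  wlog hab : a ≤ b generalizing a b
  · have := this (a := b) (b := a) (by omega) (by rwa [mul_comm]) (by omega)
    omega
  wlog hce : c ≤ e generalizing c e
  · exact (this (c := e) (e := c) (by omega) (by rwa [mul_comm (centralBinom e)]) (by omega)).symm
  wlog hac : a ≤ c generalizing a b c e
  · exact .inl <| ((this hce hsum.symm hmul.symm hab (by omega)).resolve_right (by omega)).symm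
  by_contra! hne
  have hlt := centralBinom_add_mul_lt a (d := c - a) (b := e) (by omega) (by omega)
  rw [show a + (c - a) = c by omega, show e + (c - a) = b by omega] at hlt
  exact hlt.ne' hmul

end CentralBinom

section PreservesDist

variable {ι α : Type*} [Fintype ι] [DecidableEq α]

/-- `φ` preserves the distance `D`, i.e. it is a `{D}`-isometry; bijectivity is not included. -/
def PreservesDist (φ : (ι → α) → ι → α) (D : ℕ) : Prop :=
  ∀ ⦃x y⦄, hammingDist x y = D → hammingDist (φ x) (φ y) = D

lemma PreservesDist.hammingDist_eq_iff [Finite α] {φ : Equiv.Perm (ι → α)} {D : ℕ}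
    (hφ : PreservesDist φ D) {x y : ι → α} :
    hammingDist (φ x) (φ y) = D ↔ hammingDist x y = D := by
  refine ⟨fun h ↦ ?_, fun h ↦ hφ h⟩
  let pairPerm : Equiv.Perm ((ι → α) × (ι → α)) := φ.prodCongr φ
  have hinv := Equiv.Perm.perm_symm_on_of_perm_on_finite (f := pairPerm)
    (p := fun p ↦ hammingDist p.1 p.2 = D) (fun _ hp ↦ hφ hp) (x := (φ x, φ y)) h
  simpa [pairPerm] using hinv

variable [DecidableEq ι] [Fintype α]

/-- The words at distance `m` from both `x` and `y`; a bijection preserving the distance `m`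
preserves their number. -/
def commonSphere (m : ℕ) (x y : ι → α) : Finset (ι → α) :=
  {z | hammingDist x z = m ∧ hammingDist y z = m}

lemma PreservesDist.card_commonSphere {φ : Equiv.Perm (ι → α)} {m : ℕ}
    (hφ : PreservesDist φ m) (x y : ι → α) :
    #(commonSphere m (φ x) (φ y)) = #(commonSphere m x y) :=
  (card_equiv φ fun z ↦ by simp [commonSphere, hφ.hammingDist_eq_iff]).symm

end PreservesDist

section Words

variable {ι : Type*} [Fintype ι]

section DiffSet

/-- The coordinates in which `x` and `y` differ. -/
def diffSet {α : Type*} [DecidableEq α] (x y : ι → α) : Finset ι := {i | x i ≠ y i}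

lemma card_diffSet {α : Type*} [DecidableEq α] (x y : ι → α) : #(diffSet x y) = hammingDist x y :=
  rfl

variable [DecidableEq ι]

lemma diffSet_symmDiff_diffSet (x y z : ι → ZMod 2) :
    diffSet x y ∆ diffSet x z = diffSet y z := by
  have hbit : ∀ u v w : ZMod 2, (u ≠ v ∧ ¬u ≠ w ∨ u ≠ w ∧ ¬u ≠ v) ↔ v ≠ w := by decide
  ext i
  simpa only [mem_symmDiff, diffSet, mem_filter_univ] using hbit (x i) (y i) (z i)

/-- With `x` as the origin, words correspond to sets of coordinates: `z` is sent to its set of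
differences from `x`, and `S` to the word obtained from `x` by flipping the coordinates in `S`. -/
def diffSetEquiv (x : ι → ZMod 2) : (ι → ZMod 2) ≃ Finset ι where
  toFun := diffSet x
  invFun S i := if i ∈ S then x i + 1 else x i
  left_inv z := by
    have hbit : ∀ u v : ZMod 2, (if u ≠ v then u + 1 else u) = v := by decide
    funext i
    simpa [diffSet] using hbit (x i) (z i)
  right_inv S := by
    ext i
    by_cases hi : i ∈ S <;> simp [diffSet, hi]

lemma hammingDist_add_two_mul_card_inter (x y z : ι → ZMod 2) :
    hammingDist y z + 2 * #(diffSet x y ∩ diffSet x z) = hammingDist x y + hammingDist x z := by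
  simp only [← card_diffSet, ← diffSet_symmDiff_diffSet x y z,
    card_symmDiff_add_two_mul_card_inter]

end DiffSet

lemma hammingDist_perimeter_le (x y z : ι → ZMod 2) :
    hammingDist x y + hammingDist y z + hammingDist x z ≤ 2 * Fintype.card ι := by
  classical
  have hyz := hammingDist_add_two_mul_card_inter x y z
  have hunion := card_union_add_card_inter (diffSet x y) (diffSet x z)
  have hle := card_le_univ (diffSet x y ∪ diffSet x z)
  simp only [card_diffSet] at hunion
  omega

lemma hammingDist_add_hammingDist_antipode (x : ι → ZMod 2) {y y' : ι → ZMod 2}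
    (hy : hammingDist y y' = Fintype.card ι) :
    hammingDist x y + hammingDist x y' = Fintype.card ι := by
  have hperimeter := hammingDist_perimeter_le x y y'
  have htriangle := hammingDist_triangle_left y y' x
  omega

lemma exists_hammingDist_eq_add {x z : ι → ZMod 2} {t : ℕ}
    (ht : hammingDist x z + t ≤ Fintype.card ι) :
    ∃ y, hammingDist x y = hammingDist x z + t ∧ hammingDist y z = t := by
  classical
  obtain ⟨E, hE, rfl⟩ : ∃ E ⊆ (diffSet z x)ᶜ, #E = t := by
    refine exists_subset_card_eq ?_
    rw [card_compl, card_diffSet, hammingDist_comm]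
    omega
  obtain ⟨y, rfl : diffSet z y = E⟩ := (diffSetEquiv z).surjective E
  have hdisj : diffSet z x ∩ diffSet z y = ∅ :=
    disjoint_iff_inter_eq_empty.mp (subset_compl_iff_disjoint_right.mp hE).symm
  have hxy := hammingDist_add_two_mul_card_inter z x y
  rw [hdisj, card_empty, mul_zero, add_zero, hammingDist_comm z x] at hxy
  exact ⟨y, hxy, hammingDist_comm y z⟩

section CommonSphere

variable [DecidableEq ι]

lemma even_hammingDist_of_mem_commonSphere {m : ℕ} {x y z : ι → ZMod 2}
    (hz : z ∈ commonSphere m x y) : Even (hammingDist x y) := by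
  obtain ⟨hxz, hyz⟩ := (mem_filter_univ z).mp hz
  have := hammingDist_add_two_mul_card_inter x y z
  exact ⟨#(diffSet x y ∩ diffSet x z), by omega⟩

lemma mem_commonSphere_iff {m j : ℕ} (hj : j ≤ m) {x y z : ι → ZMod 2}
    (hxy : hammingDist x y = 2 * j) :
    z ∈ commonSphere m x y ↔
      #(diffSet x z ∩ diffSet x y) = j ∧ #(diffSet x z \ diffSet x y) = m - j := by
  have hyz := hammingDist_add_two_mul_card_inter x y z
  have hxz := card_inter_add_card_sdiff (diffSet x z) (diffSet x y)
  rw [card_diffSet] at hxz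
  rw [inter_comm] at hyz
  rw [commonSphere, mem_filter_univ]
  omega

lemma card_commonSphere {m j : ℕ} (hj : j ≤ m) {x y : ι → ZMod 2}
    (hxy : hammingDist x y = 2 * j) :
    #(commonSphere m x y) = (2 * j).choose j * (Fintype.card ι - 2 * j).choose (m - j) := by
  rw [← hxy, ← card_diffSet, ← card_compl, ← card_filter_card_inter_card_sdiff]
  refine card_equiv (diffSetEquiv x) fun z ↦ ?_
  rw [mem_commonSphere_iff hj hxy, mem_filter_univ]
  rfl

lemma two_mul_card_commonSphere {m : ℕ} (hι : Fintype.card ι = 2 * m + 1)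
    {j : ℕ} {x y : ι → ZMod 2} (hxy : hammingDist x y = 2 * j) :
    2 * #(commonSphere m x y) = j.centralBinom * (m + 1 - j).centralBinom := by
  have hle := hammingDist_le_card_fintype (x := x) (y := y)
  obtain ⟨l, rfl⟩ : ∃ l, m = j + l := Nat.exists_eq_add_of_le (by omega)
  have hhalf : (l + 1).centralBinom = 2 * (2 * l + 1).choose l := by
    rw [Nat.centralBinom_eq_two_mul_choose, mul_add_one, Nat.choose_succ_succ,
      Nat.choose_symm_half, ← two_mul]
  rw [card_commonSphere (by omega) hxy, hι, show 2 * (j + l) + 1 - 2 * j = 2 * l + 1 by omega,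
    Nat.add_sub_cancel_left, add_assoc, Nat.add_sub_cancel_left, hhalf,
    Nat.centralBinom_eq_two_mul_choose]
  ring

end CommonSphere

section Isometry

variable {m : ℕ} {φ : Equiv.Perm (ι → ZMod 2)}

lemma PreservesDist.hammingDist_eq_or_reflected (hι : Fintype.card ι = 2 * m + 1)
    (hφ : PreservesDist φ m) {x y : ι → ZMod 2} {j : ℕ}
    (hxy : hammingDist x y = 2 * j) :
    hammingDist (φ x) (φ y) = 2 * j ∨ hammingDist (φ x) (φ y) + 2 * j = 2 * m + 2 := by
  classical
  have hcard := two_mul_card_commonSphere hι hxy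
  rw [← hφ.card_commonSphere] at hcard
  have hne : (commonSphere m (φ x) (φ y)).Nonempty := by
    have := Nat.mul_pos j.centralBinom_pos (m + 1 - j).centralBinom_pos
    exact card_pos.mp (by omega)
  obtain ⟨i, hi⟩ := (even_hammingDist_of_mem_commonSphere hne.choose_spec).exists_two_nsmul
  rw [smul_eq_mul] at hi
  rw [two_mul_card_commonSphere hι hi] at hcard
  have hle := hammingDist_le_card_fintype (x := x) (y := y)
  have hle' := hammingDist_le_card_fintype (x := φ x) (y := φ y)
  have hij := eq_or_eq_of_centralBinom_mul_eq (by omega) hcard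
  omega

lemma PreservesDist.of_add_two (hι : Fintype.card ι = 2 * m + 1)
    (hφ : PreservesDist φ m) {j : ℕ} (hj : 2 * (j + 1) ≤ m)
    (hsucc : PreservesDist φ (2 * (j + 1))) : PreservesDist φ (2 * j) := by
  intro x z hxz
  obtain ⟨y, hxy, hyz⟩ := exists_hammingDist_eq_add (x := x) (z := z) (t := 2) (by omega)
  have hφxy := hsucc (x := x) (y := y) (by omega)
  refine (hφ.hammingDist_eq_or_reflected hι hxz).resolve_right fun hreflected ↦ ?_
  rcases hφ.hammingDist_eq_or_reflected hι (j := 1) hyz with hnear | hfar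
  · have htriangle := hammingDist_triangle (φ x) (φ y) (φ z)
    omega
  · have hperimeter := hammingDist_perimeter_le (φ x) (φ y) (φ z)
    omega

lemma PreservesDist.two_mul_of_le (hι : Fintype.card ι = 2 * m + 1)
    (hm : Even m) (hφ : PreservesDist φ m) {j : ℕ} (hj : 2 * j ≤ m) :
    PreservesDist φ (2 * j) := by
  obtain ⟨k, rfl⟩ := hm.exists_two_nsmul
  rw [smul_eq_mul] at hφ hj hι
  exact Nat.decreasingInduction' (P := fun j ↦ PreservesDist φ (2 * j)) (m := j) (n := k)
    (fun _ hik _ hi ↦ hφ.of_add_two hι (by omega) hi) (by omega) hφ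

lemma PreservesDist.two_mul_of_even (hι : Fintype.card ι = 2 * m + 1)
    (hm : Even m) (hφ : PreservesDist φ m) (j : ℕ) : PreservesDist φ (2 * j) := by
  intro x y hxy
  rcases hφ.hammingDist_eq_or_reflected hι hxy with hsame | hreflected
  · exact hsame
  rcases le_or_gt (2 * j) m with hj | hj
  · exact hφ.two_mul_of_le hι hm hj hxy
  · obtain ⟨k, rfl⟩ := hm
    have hsmall : PreservesDist φ (2 * (k + k + 1 - j)) :=
      hφ.two_mul_of_le hι ⟨k, rfl⟩ (by omega)
    have := (hsmall.hammingDist_eq_iff (x := x) (y := y)).mp (by omega)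
    omega

end Isometry

end Words

end BooleanCube

open BooleanCube in
theorem tripleIsometry_one_mod_four_general {ι : Type*} [Fintype ι]
    (hι : Fintype.card ι % 4 = 1) {φ : (ι → ZMod 2) → ι → ZMod 2} (hinj : Function.Injective φ)
    (hhalf : PreservesDist φ ((Fintype.card ι - 1) / 2))
    (hantipode : PreservesDist φ (Fintype.card ι)) (x y : ι → ZMod 2) :
    hammingDist (φ x) (φ y) = hammingDist x y := by
  set m := (Fintype.card ι - 1) / 2
  have hcard : Fintype.card ι = 2 * m + 1 := by omega
  have hm : Even m := Nat.even_iff.mpr (by omega)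
  lift φ to Equiv.Perm (ι → ZMod 2) using Finite.injective_iff_bijective.mp hinj
  have heven := hhalf.two_mul_of_even hcard hm
  rcases Nat.even_or_odd' (hammingDist x y) with ⟨j, hj | hj⟩
  · rw [hj, heven j hj]
  · obtain ⟨y', hy', -⟩ := exists_hammingDist_eq_add (x := y) (z := y) (t := Fintype.card ι)
      (by rw [hammingDist_self, zero_add])
    rw [hammingDist_self, zero_add] at hy'
    have hxy' := hammingDist_add_hammingDist_antipode x hy'
    have hφxy' := hammingDist_add_hammingDist_antipode (φ x) (hantipode hy')
    have := heven (m - j) (x := x) (y := y') (by omega)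
    omega

/-- For `n ≡ 1 (mod 4)`, every `{(n-1)/2, (n+1)/2, n}`-isometry of the Boolean cube `C_n`
fixing `0̄` is an isometry. -/
theorem tripleIsometry_one_mod_four (n : ℕ) (hn : n % 4 = 1)
    (φ : (Fin n → ZMod 2) → Fin n → ZMod 2) (hbij : Function.Bijective φ)
    (h0 : φ 0 = 0)
    (hφ : ∀ x y, (hammingDist x y = (n - 1) / 2 ∨ hammingDist x y = (n + 1) / 2 ∨
        hammingDist x y = n) →
      hammingDist (φ x) (φ y) = hammingDist x y) :
    ∀ x y, hammingDist (φ x) (φ y) = hammingDist x y := by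
  refine tripleIsometry_one_mod_four_general (by simpa using hn) hbij.injective ?_ ?_ <;>
    exact fun x y hxy ↦ (hφ x y (by simp_all)).trans hxy
end
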